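/- arXiv:2604.08616 — 5 statements merged into one kernel-verified Lean document; each statement's English description precedes it below -/
import Mathlib

section
/- Let α ∈ (1/2, 1), π > 0, and real numbers z_A, z_B, z_C with 0 < z_C ≤ z_B < z_A < 1. Then (1−α) + (2α−1)·(1 − z_C/(z_A^{π/(1+π)} · z_B^{1/(1+π)})) > (1−α) + (2α−1)·(1 − z_C/z_B). Equivalently, the center's equilibrium time-0 concession atom F_C*(0) = 1 − z_C/(z_A^{π/(1+π)} z_B^{1/(1+π)}) strictly exceeds the bilateral AG atom F^{AG}_{CB}(0) = 1 − z_C/z_B, so the weak peripheral's equilibrium payoff v_B* strictly exceeds its bilateral AG benchmark payoff v^{AG}_{BC}. -/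
/-! The center's atom in the three-player equilibrium is the bilateral atom with the opponent's
reputation `zB` replaced by a weighted geometric mean of `zA` and `zB`. This mean lies above `zB`,
and both the atom and the weak peripheral's payoff increase strictly with it. -/

/-- The time-0 concession atom of a party with reputation `z`, when the opponent's reputation
is `r`. The three-player atom of the center is the case where `r` is the weighted geometric mean
of the peripherals' reputations. -/
noncomputable def concessionAtom (z r : ℝ) : ℝ :=
  1 - z / r

/-- The payoff of a party facing the time-0 concession atom `F`, for the committed demand share
`α`: it gets `1 - α` for sure and the premium `2 * α - 1` if the opponent concedes at once. -/
def concessionPayoff (α F : ℝ) : ℝ :=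
  (1 - α) + (2 * α - 1) * F

theorem lt_rpow_mul_rpow_of_add_eq_one {a b p q : ℝ} (hb : 0 < b) (hba : b < a) (hp : 0 < p)
    (hpq : p + q = 1) : b < a ^ p * b ^ q :=
  calc
    b = b ^ p * b ^ q := by rw [← Real.rpow_add hb, hpq, Real.rpow_one]
    _ < a ^ p * b ^ q :=
      mul_lt_mul_of_pos_right (Real.rpow_lt_rpow hb.le hba hp) (Real.rpow_pos_of_pos hb q)

theorem concessionAtom_strictMonoOn {z : ℝ} (hz : 0 < z) :
    StrictMonoOn (concessionAtom z) (Set.Ioi 0) :=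
  fun _ hr _ _ hrs ↦ sub_lt_sub_left (div_lt_div_of_pos_left hz hr hrs) 1

theorem concessionPayoff_strictMono {α : ℝ} (hα : 1 / 2 < α) : StrictMono (concessionPayoff α) :=
  have premium_pos : 0 < 2 * α - 1 := by linarith
  fun _ _ hFG ↦ add_lt_add_right (mul_lt_mul_of_pos_left hFG premium_pos) (1 - α)

theorem concessionAtom_lt_concessionAtom_rpow_mul_rpow {a b p q z : ℝ} (hz : 0 < z) (hb : 0 < b)
    (hba : b < a) (hp : 0 < p) (hpq : p + q = 1) :
    concessionAtom z b < concessionAtom z (a ^ p * b ^ q) :=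
  have lt_mean : b < a ^ p * b ^ q := lt_rpow_mul_rpow_of_add_eq_one hb hba hp hpq
  concessionAtom_strictMonoOn hz hb (hb.trans lt_mean) lt_mean

theorem stmt_3_general {alpha pi zA zB zC : ℝ} (hα : 1 / 2 < alpha) (hpi : 0 < pi) (hzC : 0 < zC)
    (hzB : 0 < zB) (hBA : zB < zA) :
    (1 - alpha) + (2 * alpha - 1) *
        (1 - zC / (zA ^ (pi / (1 + pi)) * zB ^ (1 / (1 + pi)))) >
      (1 - alpha) + (2 * alpha - 1) * (1 - zC / zB) := by
  have weight_pos : 0 < pi / (1 + pi) := by positivity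
  have weights_add : pi / (1 + pi) + 1 / (1 + pi) = 1 := by field_simp; ring
  exact concessionPayoff_strictMono hα
    (concessionAtom_lt_concessionAtom_rpow_mul_rpow hzC hzB hBA weight_pos weights_add)

/-- Proposition 2, case 2: when `0 < zC ≤ zB < zA < 1`, the weak peripheral's
multilateral payoff `(1−α) + (2α−1)(1 − zC/(zA^{π/(1+π)} zB^{1/(1+π)}))`
strictly exceeds the bilateral AG benchmark `(1−α) + (2α−1)(1 − zC/zB)`. -/
theorem stmt_3 (alpha pi zA zB zC : ℝ) (ha1 : 1 / 2 < alpha) (ha2 : alpha < 1)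
    (hpi : 0 < pi) (hzC : 0 < zC) (hCB : zC ≤ zB) (hBA : zB < zA) (hA1 : zA < 1) :
    (1 - alpha) + (2 * alpha - 1) *
        (1 - zC / (zA ^ (pi / (1 + pi)) * zB ^ (1 / (1 + pi)))) >
      (1 - alpha) + (2 * alpha - 1) * (1 - zC / zB) :=
  stmt_3_general ha1 hpi hzC (hzC.trans_le hCB) hBA
end

section
/- Let α ∈ (1/2, 1), π > 0, and real numbers z_A, z_B, z_C with 0 < z_B < z_C < z_A < 1. Define the center's multilateral equilibrium payoff v_C* by: v_C* = (1−α)(π+1) if z_C^{1+π} < z_A^π·z_B (the center bears the time-0 atom), and v_C* = (1−α)(π+1) + (2α−1)·(1 − z_B·z_A^π/z_C^{1+π}) otherwise (the weak peripheral bears the atom). Then in both cases v_C* < (1−α)(π+1) + (2α−1)·(1 − z_B/z_C), i.e., the center's equilibrium payoff is strictly below the sum of her two bilateral AG benchmark payoffs v^{AG}_{CA} + v^{AG}_{CB}. -/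
/-! In the bilateral game against the center, the weak peripheral's time-0 atom is `1 - zB / zC`.
The negotiation with `A` multiplies the ratio `zB / zC` by `(zA / zC) ^ pi > 1`, so the atom
shrinks; if it would become negative, the center bears the atom instead and gains nothing, whereas
bilaterally she gains because `zB < zC`. -/

section RpowRatio

variable {x y z p : ℝ}

lemma mul_rpow_div_rpow_one_add (hy : 0 < y) (hz : 0 ≤ z) :
    x * z ^ p / y ^ (1 + p) = x / y * (z / y) ^ p := by
  rw [Real.rpow_add hy, Real.rpow_one, Real.div_rpow hz hy.le, mul_div_mul_comm]

lemma div_lt_mul_rpow_div_rpow_one_add (hx : 0 < x) (hy : 0 < y) (hyz : y < z) (hp : 0 < p) :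
    x / y < x * z ^ p / y ^ (1 + p) := by
  have one_lt_factor : 1 < (z / y) ^ p := Real.one_lt_rpow ((one_lt_div hy).2 hyz) hp
  rw [mul_rpow_div_rpow_one_add hy (hy.trans hyz).le]
  exact lt_mul_of_one_lt_right (div_pos hx hy) one_lt_factor

end RpowRatio

theorem stmt_4_general {alpha pi zA zB zC : ℝ} (ha : 1 / 2 < alpha) (hpi : 0 < pi)
    (hzB : 0 < zB) (hBC : zB < zC) (hCA : zC < zA) :
    (if zC ^ (1 + pi) < zA ^ pi * zB
      then (1 - alpha) * (pi + 1)
      else (1 - alpha) * (pi + 1) +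
        (2 * alpha - 1) * (1 - zB * zA ^ pi / zC ^ (1 + pi)))
    < (1 - alpha) * (pi + 1) + (2 * alpha - 1) * (1 - zB / zC) := by
  have hzC : 0 < zC := hzB.trans hBC
  have weight_pos : 0 < 2 * alpha - 1 := by linarith
  split_ifs
  · have bilateral_atom_pos : 0 < 1 - zB / zC := sub_pos.2 ((div_lt_one hzC).2 hBC)
    exact lt_add_of_pos_right _ (mul_pos weight_pos bilateral_atom_pos)
  · have atom_lt_bilateral_atom : 1 - zB * zA ^ pi / zC ^ (1 + pi) < 1 - zB / zC :=
      sub_lt_sub_left (div_lt_mul_rpow_div_rpow_one_add hzB hzC hCA hpi) 1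
    gcongr

/-- Proposition 2, case 3 (center's loss): under `0 < zB < zC < zA < 1`, the
center's multilateral equilibrium payoff (in either subcase of who bears the
time-0 atom) is strictly below the sum of her two bilateral AG benchmark
payoffs `(1−α)(π+1) + (2α−1)(1 − zB/zC)`. -/
theorem stmt_4 (alpha pi zA zB zC : ℝ) (ha1 : 1 / 2 < alpha) (ha2 : alpha < 1)
    (hpi : 0 < pi) (hzB : 0 < zB) (hBC : zB < zC) (hCA : zC < zA) (hA1 : zA < 1) :
    (if zC ^ (1 + pi) < zA ^ pi * zB
      then (1 - alpha) * (pi + 1)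
      else (1 - alpha) * (pi + 1) +
        (2 * alpha - 1) * (1 - zB * zA ^ pi / zC ^ (1 + pi)))
    < (1 - alpha) * (pi + 1) + (2 * alpha - 1) * (1 - zB / zC) :=
  stmt_4_general ha1 hpi hzB hBC hCA
end

section
/- Let z_A, z_B be real numbers with 0 < z_B < z_A < 1. Then the function π ↦ z_A^{π/(1+π)} · z_B^{1/(1+π)} is strictly increasing on (0, ∞). Consequently, for any fixed z_C > 0, the time-0 atom size π ↦ 1 − z_C/(z_A^{π/(1+π)} · z_B^{1/(1+π)}) is strictly increasing in π. -/
/-!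
With `t = π / (1 + π)` the product is the weighted geometric mean
`zA ^ t * zB ^ (1 - t) = zB * (zA / zB) ^ t`, an exponential in `t` with base `zA / zB > 1`, and
`t` increases with `π`.
-/

theorem one_div_one_add_eq_one_sub {𝕜 : Type*} [DivisionRing 𝕜] {x : 𝕜} (hx : 1 + x ≠ 0) :
    1 / (1 + x) = 1 - x / (1 + x) := by
  rw [one_sub_div hx, add_sub_cancel_right]

section OrderedField

variable {α 𝕜 : Type*} [Preorder α] [Field 𝕜] [LinearOrder 𝕜] [IsStrictOrderedRing 𝕜]

theorem strictMonoOn_const_sub_const_div {f : α → 𝕜} {s : Set α} (hf : StrictMonoOn f s)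
    (hpos : ∀ x ∈ s, 0 < f x) (a : 𝕜) {c : 𝕜} (hc : 0 < c) :
    StrictMonoOn (fun x => a - c / f x) s := fun x hx _ hy hxy =>
  sub_lt_sub_left (div_lt_div_of_pos_left hc (hpos x hx) (hf hx hy hxy)) a

theorem strictMonoOn_div_one_add : StrictMonoOn (fun x : 𝕜 => x / (1 + x)) (Set.Ioi (-1)) := by
  have hpos : ∀ x ∈ Set.Ioi (-1 : 𝕜), 0 < 1 + x := fun x hx => neg_lt_iff_pos_add'.mp hx
  have hone_sub : StrictMonoOn (fun x : 𝕜 => 1 - 1 / (1 + x)) (Set.Ioi (-1)) :=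
    strictMonoOn_const_sub_const_div (add_right_strictMono.strictMonoOn _) hpos 1 one_pos
  refine hone_sub.congr fun x hx => ?_
  simp only [one_div_one_add_eq_one_sub (hpos x hx).ne', sub_sub_cancel]

end OrderedField

theorem strictMono_rpow_mul_rpow_one_sub {a b : ℝ} (hb : 0 < b) (hba : b < a) :
    StrictMono fun t : ℝ => a ^ t * b ^ (1 - t) := by
  have hratio : StrictMono fun t : ℝ => (a / b) ^ t * b :=
    (Real.strictMono_rpow_of_base_gt_one ((one_lt_div hb).mpr hba)).mul_const hb
  convert hratio using 2 with t
  rw [Real.rpow_sub hb, Real.rpow_one, Real.div_rpow (hb.trans hba).le hb.le]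
  ring

theorem stmt_5_general {zA zB : ℝ} (hzB : 0 < zB) (hBA : zB < zA) :
    StrictMonoOn (fun pi : ℝ => zA ^ (pi / (1 + pi)) * zB ^ (1 / (1 + pi))) (Set.Ioi (-1)) ∧
    ∀ zC : ℝ, 0 < zC →
      StrictMonoOn
        (fun pi : ℝ => 1 - zC / (zA ^ (pi / (1 + pi)) * zB ^ (1 / (1 + pi))))
        (Set.Ioi (-1)) := by
  have hmean : StrictMonoOn (fun pi : ℝ => zA ^ (pi / (1 + pi)) * zB ^ (1 / (1 + pi)))
      (Set.Ioi (-1)) := by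
    refine ((strictMono_rpow_mul_rpow_one_sub hzB hBA).comp_strictMonoOn
      strictMonoOn_div_one_add).congr fun pi hpi => ?_
    have hne : 1 + pi ≠ 0 := (neg_lt_iff_pos_add'.mp hpi).ne'
    simp only [Function.comp_apply, one_div_one_add_eq_one_sub hne]
  have hmean_pos (pi : ℝ) : 0 < zA ^ (pi / (1 + pi)) * zB ^ (1 / (1 + pi)) :=
    mul_pos (Real.rpow_pos_of_pos (hzB.trans hBA) _) (Real.rpow_pos_of_pos hzB _)
  exact ⟨hmean, fun _ hzC =>
    strictMonoOn_const_sub_const_div hmean (fun pi _ => hmean_pos pi) 1 hzC⟩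

/-- Comparative static in the stakes π: for `0 < zB < zA < 1`, the map
`π ↦ zA^{π/(1+π)} zB^{1/(1+π)}` is strictly increasing on `(0, ∞)`, and hence
for any fixed `zC > 0` so is the time-0 atom size
`π ↦ 1 − zC/(zA^{π/(1+π)} zB^{1/(1+π)})`. -/
theorem stmt_5 (zA zB : ℝ) (hzB : 0 < zB) (hBA : zB < zA) (hA1 : zA < 1) :
    StrictMonoOn (fun pi : ℝ => zA ^ (pi / (1 + pi)) * zB ^ (1 / (1 + pi)))
      (Set.Ioi 0) ∧
    ∀ zC : ℝ, 0 < zC →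
      StrictMonoOn
        (fun pi : ℝ => 1 - zC / (zA ^ (pi / (1 + pi)) * zB ^ (1 / (1 + pi))))
        (Set.Ioi 0) := by
  have hsub : Set.Ioi (0 : ℝ) ⊆ Set.Ioi (-1) := Set.Ioi_subset_Ioi (by norm_num)
  exact (stmt_5_general hzB hBA).imp (·.mono hsub) fun h zC hzC => (h zC hzC).mono hsub
end

section
/- Let λ > 0, π > 0, and real numbers z_A, z_B, z_C with 0 < z_B < z_A < 1, 0 < z_C < z_A, and z_C^{1+π} < z_A^π · z_B. Define t* = log(z_A/z_B)/((1+π)λ), the multilateral terminal time T = t* + (−log z_A)/λ, and the bilateral terminal times T^{AG}_{AC} = (−log z_A)/λ and T^{AG}_{BC} = (−log z_C)/λ. Then T > T^{AG}_{AC} and T < T^{AG}_{BC}. -/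
/-!
The multilateral game ends later than the bilateral A–C benchmark exactly by the initial phase
`t*`, and the B–C benchmark ends later than the A–C one by `log (zA / zC) / λ`, the time a
posterior growing at rate `λ` takes to climb from `zC` to `zA`. So both comparisons are about
`t*`: it is positive iff `zB < zA`, and it is below `log (zA / zC) / λ` iff
`log (zA / zB) < (1 + π) log (zA / zC)`, which is the logarithm of `zC ^ (1 + π) < zA ^ π * zB`.
-/

/-- The terminal time of a bilateral game with hazard `lam` whose common posterior after the
time-0 atom is `z`, i.e. the solution `T` of `z * exp (lam * T) = 1`. -/
noncomputable def bilateralTerminalTime (lam z : ℝ) : ℝ :=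
  -Real.log z / lam

/-- The length `t*` of the initial phase of the three-player game, in which a posterior growing at
rate `(1 + pi) * lam` climbs from `zB` to `zA`. -/
noncomputable def initialPhaseLength (lam pi zA zB : ℝ) : ℝ :=
  Real.log (zA / zB) / ((1 + pi) * lam)

/-- The terminal time of the three-player game: after the initial phase all posteriors equal `zA`
and grow with the common hazard `lam`, as in a bilateral game started at `zA`. -/
noncomputable def multilateralTerminalTime (lam pi zA zB : ℝ) : ℝ :=
  initialPhaseLength lam pi zA zB + bilateralTerminalTime lam zA

section

variable {lam pi zA zB zC : ℝ}

theorem bilateralTerminalTime_sub (hzA : zA ≠ 0) (hzC : zC ≠ 0) :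
    bilateralTerminalTime lam zC - bilateralTerminalTime lam zA = Real.log (zA / zC) / lam := by
  rw [bilateralTerminalTime, bilateralTerminalTime, Real.log_div hzA hzC]
  ring

theorem rpow_one_add_lt_rpow_mul_iff_log_div_lt (hzA : 0 < zA) (hzB : 0 < zB) (hzC : 0 < zC) :
    zC ^ (1 + pi) < zA ^ pi * zB ↔ Real.log (zA / zB) < (1 + pi) * Real.log (zA / zC) := by
  have hzApi : 0 < zA ^ pi := Real.rpow_pos_of_pos hzA pi
  rw [← Real.log_lt_log_iff (Real.rpow_pos_of_pos hzC _) (mul_pos hzApi hzB),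
    Real.log_mul hzApi.ne' hzB.ne', Real.log_rpow hzC, Real.log_rpow hzA,
    Real.log_div hzA.ne' hzB.ne', Real.log_div hzA.ne' hzC.ne']
  constructor <;> intro h <;> linarith

theorem initialPhaseLength_pos_iff (hlam : 0 < lam) (hpi : -1 < pi) (hzA : 0 < zA)
    (hzB : 0 < zB) : 0 < initialPhaseLength lam pi zA zB ↔ zB < zA := by
  have hrate : 0 < (1 + pi) * lam := mul_pos (by linarith) hlam
  rw [initialPhaseLength, div_pos_iff_of_pos_right hrate, Real.log_pos_iff (by positivity),
    one_lt_div hzB]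

theorem initialPhaseLength_lt_log_div_iff (hlam : 0 < lam) (hpi : -1 < pi) (hzA : 0 < zA)
    (hzB : 0 < zB) (hzC : 0 < zC) :
    initialPhaseLength lam pi zA zB < Real.log (zA / zC) / lam ↔
      zC ^ (1 + pi) < zA ^ pi * zB := by
  have hpi' : 0 < 1 + pi := by linarith
  rw [rpow_one_add_lt_rpow_mul_iff_log_div_lt hzA hzB hzC, initialPhaseLength, ← div_div,
    div_lt_div_iff_of_pos_right hlam, div_lt_iff₀' hpi']

theorem stmt_6_general (hlam : 0 < lam) (hpi : -1 < pi) (hzA : 0 < zA) (hzB : 0 < zB)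
    (hzC : 0 < zC) :
    (multilateralTerminalTime lam pi zA zB > bilateralTerminalTime lam zA ↔ zB < zA) ∧
      (multilateralTerminalTime lam pi zA zB < bilateralTerminalTime lam zC ↔
        zC ^ (1 + pi) < zA ^ pi * zB) := by
  constructor
  · rw [multilateralTerminalTime, gt_iff_lt, lt_add_iff_pos_left,
      initialPhaseLength_pos_iff hlam hpi hzA hzB]
  · rw [multilateralTerminalTime, ← lt_sub_iff_add_lt, bilateralTerminalTime_sub hzA.ne' hzC.ne',
      initialPhaseLength_lt_log_div_iff hlam hpi hzA hzB hzC]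

end

/-- Terminal-time comparison: with `t* = log(zA/zB)/((1+π)λ)`, the multilateral
terminal time `T = t* + (−log zA)/λ` exceeds the bilateral A–C terminal time
`(−log zA)/λ` but is shorter than the bilateral B–C terminal time
`(−log zC)/λ`. -/
theorem stmt_6 (lam pi zA zB zC : ℝ) (hlam : 0 < lam) (hpi : 0 < pi)
    (hzB : 0 < zB) (hBA : zB < zA) (hA1 : zA < 1) (hzC : 0 < zC) (hCA : zC < zA)
    (hlag : zC ^ (1 + pi) < zA ^ pi * zB) :
    Real.log (zA / zB) / ((1 + pi) * lam) + (-Real.log zA) / lam >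
      (-Real.log zA) / lam ∧
    Real.log (zA / zB) / ((1 + pi) * lam) + (-Real.log zA) / lam <
      (-Real.log zC) / lam := by
  have h := stmt_6_general hlam (neg_one_lt_zero.trans hpi) (hzB.trans hBA) hzB hzC
  exact ⟨h.1.mpr hBA, h.2.mpr hlag⟩
end

section
/- Let λ > 0, T > 0, and let h : [0, T] → ℝ be differentiable with h'(t) = λ·h(t)·((−1 + √(1 + 4·h(t)))/2 − 1) for all t ∈ [0, T], and h(T) = 1. Then for every t ∈ [0, T), 1 < h(t) < 2. -/
/-!
The drift `x ↦ λ x ((−1 + √(1 + 4x))/2 − 1)` vanishes at `0` and `2`, is negative in between, and is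
Lipschitz on `[0, 2]`. By uniqueness, a trajectory that ever sat at one of these two rest points
would stay there, so a trajectory ending in `(0, 2)` has always been in `(0, 2)`, where the sign of
the drift makes it strictly decreasing.
-/

open Set

section ODE

theorem exists_last_mem_frontier_of_continuousOn {α X : Type*} [ConditionallyCompleteLinearOrder α]
    [TopologicalSpace α] [OrderTopology α] [DenselyOrdered α] [TopologicalSpace X]
    {U : Set X} {γ : α → X} {a b : α} (hγ : ContinuousOn γ (Icc a b)) (hU : IsOpen U)
    (hab : a ≤ b) (ha : γ a ∉ U) (hb : γ b ∈ U) :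
    ∃ s ∈ Ico a b, γ s ∈ frontier U ∧ MapsTo γ (Ioc s b) U := by
  have hcompact : IsCompact (Icc a b ∩ γ ⁻¹' Uᶜ) :=
    isCompact_Icc.of_isClosed_subset
      (hγ.preimage_isClosed_of_isClosed isClosed_Icc hU.isClosed_compl) inter_subset_left
  obtain ⟨s, ⟨hs, hsU⟩, hlast⟩ := hcompact.exists_isGreatest ⟨a, left_mem_Icc.2 hab, ha⟩
  have hsb : s < b := hs.2.lt_of_ne fun h ↦ hsU (h ▸ hb)
  have hmaps : MapsTo γ (Ioc s b) U := fun t ht ↦ by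
    by_contra htU
    exact ht.1.not_ge (hlast ⟨⟨hs.1.trans ht.1.le, ht.2⟩, htU⟩)
  have hsub : Ioc s b ⊆ Icc a b := Ioc_subset_Icc_self.trans (Icc_subset_Icc_left hs.1)
  have hclosure : γ s ∈ closure U :=
    ((hγ s hs).mono hsub).mem_closure
      (by rw [closure_Ioc hsb.ne]; exact left_mem_Icc.2 hsb.le) hmaps
  exact ⟨s, ⟨hs.1, hsb⟩, hU.frontier_eq ▸ ⟨hclosure, hsU⟩, hmaps⟩

variable {E : Type*} [NormedAddCommGroup E] [NormedSpace ℝ E] {v : E → E} {γ : ℝ → E} {a b : ℝ}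
  {K : NNReal}

theorem eqOn_const_of_isIntegralCurveOn_of_eq_zero {s : Set E}
    (hγ : IsIntegralCurveOn γ (fun _ ↦ v) (Icc a b)) (hv : LipschitzOnWith K v s)
    (hs : MapsTo γ (Icc a b) s) (hzero : v (γ a) = 0) :
    EqOn γ (fun _ ↦ γ a) (Icc a b) := by
  intro t ht
  refine ODE_solution_unique_of_mem_Icc_right (v := fun _ ↦ v) (s := fun _ ↦ s)
    (fun _ _ ↦ hv) hγ.continuousOn (fun r hr ↦ ?_) (fun r hr ↦ hs (Ico_subset_Icc_self hr))
    continuousOn_const (fun r _ ↦ ?_) (fun _ _ ↦ hs (left_mem_Icc.2 (ht.1.trans ht.2))) rfl ht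
  · exact (hγ r (Ico_subset_Icc_self hr)).mono_of_mem_nhdsWithin (Icc_mem_nhdsGE_of_mem hr)
  · simpa only [hzero] using hasDerivWithinAt_const r (Ici r) (γ a)

theorem mapsTo_of_isIntegralCurveOn_of_eq_zero_on_frontier {U : Set E}
    (hγ : IsIntegralCurveOn γ (fun _ ↦ v) (Icc a b)) (hU : IsOpen U)
    (hv : LipschitzOnWith K v (closure U)) (hzero : ∀ x ∈ frontier U, v x = 0) (hb : γ b ∈ U) :
    MapsTo γ (Icc a b) U := by
  intro t ht
  by_contra htU
  have hγt := hγ.mono (Icc_subset_Icc_left ht.1)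
  obtain ⟨s, hs, hsU, hmaps⟩ :=
    exists_last_mem_frontier_of_continuousOn hγt.continuousOn hU ht.2 htU hb
  have hclosure : MapsTo γ (Icc s b) (closure U) := fun r hr ↦ by
    rcases hr.1.eq_or_lt with rfl | hsr
    · exact frontier_subset_closure hsU
    · exact subset_closure (hmaps ⟨hsr, hr.2⟩)
  have hconst : γ b = γ s :=
    eqOn_const_of_isIntegralCurveOn_of_eq_zero (hγt.mono (Icc_subset_Icc_left hs.1)) hv hclosure
      (hzero _ hsU) (right_mem_Icc.2 hs.2.le)
  exact (hU.frontier_eq ▸ hsU).2 (hconst ▸ hb)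

end ODE

theorem strictAntiOn_of_isIntegralCurveOn_of_neg {v γ : ℝ → ℝ} {s : Set ℝ}
    (hγ : IsIntegralCurveOn γ (fun _ ↦ v) s) (hs : Convex ℝ s)
    (hneg : ∀ t ∈ interior s, v (γ t) < 0) : StrictAntiOn γ s :=
  strictAntiOn_of_hasDerivWithinAt_neg hs hγ.continuousOn
    (fun t ht ↦ (hγ t (interior_subset ht)).mono interior_subset) hneg

/-- The right-hand side `x (λ_C - λ)` of the equation for the center-to-peripheral posterior ratio
`x`, where `λ_C = λ (-1 + √(1 + 4x)) / 2` is the center's hazard. -/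
noncomputable def ratioDrift (lam x : ℝ) : ℝ :=
  lam * x * ((-1 + √(1 + 4 * x)) / 2 - 1)

namespace ratioDrift

theorem apply_zero (lam : ℝ) : ratioDrift lam 0 = 0 := by
  simp [ratioDrift]

theorem apply_two (lam : ℝ) : ratioDrift lam 2 = 0 := by
  have hsqrt : √(1 + 4 * 2 : ℝ) = 3 := by
    rw [Real.sqrt_eq_iff_eq_sq] <;> norm_num
  rw [ratioDrift, hsqrt]
  norm_num

theorem neg_of_mem_Ioo {lam x : ℝ} (hlam : 0 < lam) (hx : x ∈ Ioo 0 2) :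
    ratioDrift lam x < 0 := by
  have hsqrt : √(1 + 4 * x) < 3 := by
    rw [Real.sqrt_lt' (by norm_num)]
    linarith [hx.2]
  exact mul_neg_of_pos_of_neg (mul_pos hlam hx.1) (by linarith)

theorem contDiffOn (lam : ℝ) {n : WithTop ℕ∞} : ContDiffOn ℝ n (ratioDrift lam) (Ioi (-1 / 4)) := by
  have hsqrt : ContDiffOn ℝ n (fun x : ℝ ↦ √(1 + 4 * x)) (Ioi (-1 / 4)) :=
    ContDiffOn.sqrt (by fun_prop) fun x hx ↦ by linarith [mem_Ioi.1 hx]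
  unfold ratioDrift
  fun_prop

theorem exists_lipschitzOnWith (lam : ℝ) : ∃ K, LipschitzOnWith K (ratioDrift lam) (Icc 0 2) :=
  ((contDiffOn lam).mono fun x hx ↦ mem_Ioi.2 (by linarith [hx.1])).exists_lipschitzOnWith
    one_ne_zero (convex_Icc 0 2) isCompact_Icc

theorem mapsTo_Ioo {lam a T : ℝ} {h : ℝ → ℝ}
    (hh : IsIntegralCurveOn h (fun _ ↦ ratioDrift lam) (Icc a T)) (hT : h T ∈ Ioo 0 2) :
    MapsTo h (Icc a T) (Ioo 0 2) := by
  have hzero : ∀ x ∈ frontier (Ioo (0 : ℝ) 2), ratioDrift lam x = 0 := by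
    rw [frontier_Ioo two_pos]
    rintro x (rfl | rfl)
    exacts [apply_zero lam, apply_two lam]
  obtain ⟨K, hK⟩ := exists_lipschitzOnWith lam
  rw [← closure_Ioo two_ne_zero.symm] at hK
  exact mapsTo_of_isIntegralCurveOn_of_eq_zero_on_frontier hh isOpen_Ioo hK hzero hT

end ratioDrift

theorem stmt_19_general {lam a T : ℝ} {h : ℝ → ℝ} (hlam : 0 < lam)
    (hh : IsIntegralCurveOn h (fun _ ↦ ratioDrift lam) (Icc a T)) (hT : h T ∈ Ioo 0 2) :
    ∀ t ∈ Ico a T, h T < h t ∧ h t < 2 := by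
  intro t ht
  have hmaps := ratioDrift.mapsTo_Ioo hh hT
  have hanti : StrictAntiOn h (Icc a T) :=
    strictAntiOn_of_isIntegralCurveOn_of_neg hh (convex_Icc a T) fun r hr ↦
      ratioDrift.neg_of_mem_Ioo hlam (hmaps (interior_subset hr))
  have htIcc := Ico_subset_Icc_self ht
  exact ⟨hanti htIcc (right_mem_Icc.2 (ht.1.trans ht.2.le)) ht.2, (hmaps htIcc).2⟩

/-- Partial observability (Step 2 of Prop. C.1): if `h` solves the ODE
`h'(t) = λ·h(t)·((−1+√(1+4h(t)))/2 − 1)` on `[0,T]` with terminal condition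
`h(T) = 1`, then `1 < h(t) < 2` for every `t ∈ [0, T)`. -/
theorem stmt_19 (lam T : ℝ) (h : ℝ → ℝ) (hlam : 0 < lam) (hT : 0 < T)
    (hderiv : ∀ t ∈ Set.Icc (0 : ℝ) T,
      HasDerivAt h (lam * h t * ((-1 + Real.sqrt (1 + 4 * h t)) / 2 - 1)) t)
    (hTval : h T = 1) :
    ∀ t ∈ Set.Ico (0 : ℝ) T, 1 < h t ∧ h t < 2 := by
  simpa only [hTval] using stmt_19_general hlam
    (fun t ht ↦ (hderiv t ht).hasDerivWithinAt) (by norm_num [hTval] : h T ∈ Ioo 0 2)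
end
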